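/- Let R be an integral domain with fraction field K and let A be a finite flat R-algebra whose generic fiber A^K = K ⊗_R A is block-split (e.g., A^K splits). Let p ∈ Spec(R) and suppose that the local ring R_p is unibranch, i.e., the integral closure of R_p in K is a local ring (this holds in particular if R_p is normal). Then the quotient morphism A_p → A(p) = A_p/p_pA_p is block bijective. -/

import Mathlib

open TensorProduct

section BlockDefs
variable {B : Type*} [Ring B]

/-- `e` is a centrally-primitive ("block") idempotent of the ring `B`: a nonzero central
idempotent which is not the sum of two nonzero orthogonal central idempotents. -/
def IsBlockIdem (e : B) : Prop :=
  IsIdempotentElem e ∧ e ≠ 0 ∧ (∀ x : B, e * x = x * e) ∧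
    ∀ f g : B, (∀ x : B, f * x = x * f) → (∀ x : B, g * x = x * g) →
      IsIdempotentElem f → IsIdempotentElem g → f * g = 0 → f + g = e → f = 0 ∨ g = 0

end BlockDefs

/-- The number of centrally-primitive idempotents of a ring. -/
noncomputable def numBlocks (B : Type*) [Ring B] : ℕ := Nat.card {e : B // IsBlockIdem e}

/-- A map of rings is block bijective if it restricts to a bijection between the sets of
centrally-primitive idempotents. -/
def BlockBijective {B C : Type*} [Ring B] [Ring C] (φ : B → C) : Prop :=
  Set.BijOn φ {e | IsBlockIdem e} {e | IsBlockIdem e}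

/-- A finite-dimensional algebra `B` over a field `K` is block-split if the number of its
blocks is unchanged under arbitrary field extensions `L/K`. -/
def IsBlockSplit (K : Type u) (B : Type v) [Field K] [Ring B] [Algebra K B] : Prop :=
  ∀ (L : Type u) [Field L] [Algebra K L], numBlocks B = numBlocks (L ⊗[K] B)


def IsCI {B : Type*} [Ring B] (e : B) : Prop := IsIdempotentElem e ∧ ∀ x : B, e * x = x * e

def ciEquiv (K C : Type*) [Field K] [Ring C] [Algebra K C] :
    {a : Subalgebra.center K C // IsIdempotentElem a} ≃ {e : C // IsCI e} where
  toFun a := ⟨a.1.1, congrArg Subtype.val a.2,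
    fun x => ((Subalgebra.mem_center_iff.1 a.1.2) x).symm⟩
  invFun e := ⟨⟨e.1, Subalgebra.mem_center_iff.2 fun x => (e.2.2 x).symm⟩, Subtype.ext e.2.1⟩
  left_inv _ := rfl
  right_inv _ := rfl

lemma isAtom_iff_isBlockIdem (K C : Type*) [Field K] [Ring C] [Algebra K C]
    (a : {a : Subalgebra.center K C // IsIdempotentElem a}) :
    IsAtom a ↔ IsBlockIdem (a.1.1) := by
  constructor
  · rintro ⟨h0, h1⟩
    refine ⟨congrArg Subtype.val a.2, fun h => h0 (Subtype.ext (Subtype.ext h)),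
      (ciEquiv K C a).2.2, ?_⟩
    intro f g hf hg hfi hgi hfg hs
    let f' := (ciEquiv K C).symm ⟨f, hfi, hf⟩
    have hfa : f * a.1.1 = f := by rw [← hs, mul_add, hfi, hfg, add_zero]
    have hle : f' ≤ a := Subtype.ext (show f * a.1.1 = f from hfa)
    rcases hle.lt_or_eq with h | h
    · left
      have := h1 f' h
      exact congrArg (fun z => z.1.1) this
    · right
      have h2 : f = a.1.1 := congrArg (fun z => z.1.1) h
      rw [← h2] at hs
      exact add_eq_left.1 hs
  · rintro ⟨hi, h0, hc, h⟩
    refine ⟨fun h' => h0 (congrArg (fun z => z.1.1) h'), ?_⟩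
    intro b hb
    have hle : b.1 * a.1 = b.1 := hb.le
    have hle' : b.1.1 * a.1.1 = b.1.1 := congrArg Subtype.val hle
    have hle2 : a.1.1 * b.1.1 = b.1.1 := by rw [hc, hle']
    have hbc := (ciEquiv K C b).2
    have hb2 : b.1.1 * b.1.1 = b.1.1 := hbc.1
    have hbc' : ∀ x, b.1.1 * x = x * b.1.1 := hbc.2
    rcases h b.1.1 (a.1.1 - b.1.1) hbc' (fun x => by rw [sub_mul, mul_sub, hc, hbc'])
      hbc.1 (by
        show _ = _
        rw [mul_sub, sub_mul, sub_mul, hi, hle', hle2, hb2]; simp) (by rw [mul_sub, hle', hb2, sub_self])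
      (by simp) with h3 | h3
    · exact Subtype.ext (Subtype.ext h3)
    · exact absurd (Subtype.ext (Subtype.ext (sub_eq_zero.1 h3).symm)) hb.ne

lemma ci_finite (K C : Type*) [Field K] [Ring C] [Algebra K C] [Module.Finite K C] :
    Finite {a : Subalgebra.center K C // IsIdempotentElem a} := by
  have : IsArtinianRing (Subalgebra.center K C) := IsArtinianRing.of_finite K _
  have : Finite (PrimeSpectrum (Subalgebra.center K C)) := inferInstance
  have : Finite (TopologicalSpace.Clopens (PrimeSpectrum (Subalgebra.center K C))) :=
    Finite.of_injective SetLike.coe SetLike.coe_injective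
  exact Finite.of_equiv _ (PrimeSpectrum.isIdempotentElemEquivClopens
    (R := Subalgebra.center K C)).symm.toEquiv

lemma card_ci (K C : Type*) [Field K] [Ring C] [Algebra K C] [Module.Finite K C] :
    Nat.card {e : C // IsCI e} = 2 ^ numBlocks C := by
  have := ci_finite K C
  rw [← Nat.card_congr (ciEquiv K C)]
  let α := {a : Subalgebra.center K C // IsIdempotentElem a}
  have : Fintype α := Fintype.ofFinite _
  let _ : CompleteAtomicBooleanAlgebra α := Fintype.toCompleteAtomicBooleanAlgebra α
  have e1 : α ≃ Set {a : α // IsAtom a} :=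
    (CompleteAtomicBooleanAlgebra.toSetOfIsAtom (α := α)).toEquiv
  have e2 : {a : α // IsAtom a} ≃ {e : C // IsBlockIdem e} :=
    { toFun := fun a => ⟨a.1.1.1, (isAtom_iff_isBlockIdem K C a.1).1 a.2⟩
      invFun := fun e => ⟨(ciEquiv K C).symm ⟨e.1, e.2.1, e.2.2.2.1⟩,
        (isAtom_iff_isBlockIdem K C _).2 e.2⟩
      left_inv := fun _ => rfl
      right_inv := fun _ => rfl }
  rw [Nat.card_congr e1, numBlocks, ← Nat.card_congr e2]
  classical
  rw [Nat.card_eq_fintype_card, Nat.card_eq_fintype_card, Fintype.card_set]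

lemma isCI_of_tmul {S X B : Type*} [CommRing S] [CommRing X] [Algebra S X] [Ring B] [Algebra S B]
    {e : X ⊗[S] B} (h : IsIdempotentElem e) (hc : ∀ b : B, e * (1 ⊗ₜ b) = (1 ⊗ₜ b) * e) :
    IsCI e := by
  refine ⟨h, fun x => ?_⟩
  induction x with
  | zero => simp
  | add x y hx hy => rw [mul_add, add_mul, hx, hy]
  | tmul x b =>
    have : x ⊗ₜ[S] b = x • (1 ⊗ₜ[S] b) := by simp [TensorProduct.smul_tmul']
    rw [this, mul_smul_comm, smul_mul_assoc, hc]

lemma ci_of_numBlocks {K L C : Type*} [Field K] [Field L] [Algebra K L] [Ring C] [Algebra K C]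
    [Module.Finite K C] (h : numBlocks C = numBlocks (L ⊗[K] C)) (e : L ⊗[K] C) (he : IsCI e) :
    ∃ c : C, IsCI c ∧ (1 : L) ⊗ₜ[K] c = e := by
  have hinj : Function.Injective (fun c : C => (1 : L) ⊗ₜ[K] c) :=
    Algebra.TensorProduct.includeRight_injective (R := K) (A := L) (B := C)
      (FaithfulSMul.algebraMap_injective K L)
  have := ci_finite L (L ⊗[K] C)
  have hf : Finite {e : L ⊗[K] C // IsCI e} := Finite.of_equiv _ (ciEquiv L (L ⊗[K] C))
  have := ci_finite K C
  have hf : Finite {e : C // IsCI e} := Finite.of_equiv _ (ciEquiv K C)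
  let F : {e : C // IsCI e} → {e : L ⊗[K] C // IsCI e} := fun c => ⟨1 ⊗ₜ c.1, isCI_of_tmul
    (by simp only [IsIdempotentElem, Algebra.TensorProduct.tmul_mul_tmul, mul_one, c.2.1.eq])
    (fun b => by simp only [Algebra.TensorProduct.tmul_mul_tmul, mul_one, c.2.2 b])⟩
  have hF : Function.Injective F := fun a b hab =>
    Subtype.ext (hinj (congrArg Subtype.val hab))
  have hb : Function.Bijective F := by
    refine (Nat.bijective_iff_injective_and_card F).2 ⟨hF, ?_⟩
    rw [card_ci K C, card_ci L (L ⊗[K] C), h]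
  obtain ⟨c, hc⟩ := hb.2 ⟨e, he⟩
  exact ⟨c.1, c.2, congrArg Subtype.val hc⟩

open Polynomial in
lemma norm_lemma {D K L : Type*} [CommRing D] [IsDomain D] [IsIntegrallyClosed D] [IsLocalRing D]
    [Field K] [Algebra D K] [IsFractionRing D K] [Field L] [Algebra K L] [Algebra D L]
    [IsScalarTower D K L] (n : Ideal (integralClosure D L)) [hn : n.IsMaximal]
    (b : integralClosure D L) (hb : b ∉ n) (c : K)
    (hc : IsIntegral D (algebraMap K L c * (b : L))) : ∃ d : D, algebraMap D K d = c := by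
  rcases eq_or_ne c 0 with rfl | hc0
  · exact ⟨0, by simp⟩
  have hbi : IsIntegral D (b : L) := b.2
  set g := minpoly D (b : L) with hg
  have hgm : g.Monic := minpoly.monic hbi
  have hgK : minpoly K (b : L) = g.map (algebraMap D K) :=
    minpoly.isIntegrallyClosed_eq_field_fractions' K hbi
  -- the scaled polynomial
  set h : K[X] := (g.map (algebraMap D K)).scaleRoots c with hh
  have hhm : h.Monic := by
    rw [hh, monic_scaleRoots_iff]; exact hgm.map _
  obtain ⟨q, hqm, hq⟩ := hc
  have hdvd : h ∣ q.map (algebraMap D K) := by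
    rw [← Polynomial.scaleRoots_dvd_iff _ _ (r := c⁻¹) (IsUnit.mk0 _ (inv_ne_zero hc0)), hh,
      ← scaleRoots_mul, mul_inv_cancel₀ hc0, scaleRoots_one, ← hgK]
    refine minpoly.dvd _ _ ?_
    have : (b : L) = algebraMap K L c⁻¹ * (algebraMap K L c * b) := by
      rw [← mul_assoc, ← map_mul, inv_mul_cancel₀ hc0, map_one, one_mul]
    rw [this]
    refine scaleRoots_aeval_eq_zero ?_
    rw [aeval_map_algebraMap]
    exact hq
  have hint := isIntegral_coeff_of_dvd q h hqm hhm hdvd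
  -- some lower coefficient of g is a unit
  have hex : ∃ i < g.natDegree, IsUnit (g.coeff i) := by
    by_contra! hcon
    apply hb
    have hnm : n.comap (algebraMap D (integralClosure D L)) = IsLocalRing.maximalIdeal D :=
      IsLocalRing.eq_maximalIdeal (Ideal.isMaximal_comap_of_isIntegral_of_isMaximal n)
    have hz : aeval b g = 0 := by
      apply Subtype.ext
      have := minpoly.aeval D (b : L)
      rw [← hg] at this
      rw [Polynomial.aeval_subalgebra_coe]
      exact this
    rw [aeval_eq_sum_range, Finset.sum_range_succ, hgm.coeff_natDegree, one_smul] at hz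
    have : b ^ g.natDegree ∈ n := by
      rw [← neg_eq_of_add_eq_zero_right hz]
      refine n.neg_mem (n.sum_mem fun i hi => ?_)
      rw [Algebra.smul_def]
      refine n.mul_mem_right _ ?_
      rw [← Ideal.mem_comap, hnm]
      exact hcon i (Finset.mem_range.1 hi)
    exact hn.isPrime.mem_of_pow_mem _ this
  obtain ⟨i, hi, u, hu⟩ := hex
  have h1 := hint i
  rw [hh, coeff_scaleRoots, coeff_map, natDegree_map_eq_of_injective (IsFractionRing.injective D K),
    ← hu] at h1
  have h2 : IsIntegral D (c ^ (g.natDegree - i)) := by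
    have h3 := h1.mul (isIntegral_algebraMap (R := D) (x := ((u⁻¹ : Dˣ) : D)) (A := K))
    rwa [mul_right_comm, ← map_mul, Units.mul_inv, map_one, one_mul] at h3
  exact IsIntegrallyClosed.isIntegral_iff.1 (IsIntegral.of_pow (Nat.sub_pos_of_lt hi) h2)

/-- coordinates are natural -/
lemma coord_map {S X Y B ι : Type*} [CommRing S] [CommRing X] [Algebra S X] [CommRing Y]
    [Algebra S Y] [Ring B] [Algebra S B] (b : Module.Basis ι S B) (φ : X →ₐ[S] Y) (y : X ⊗[S] B)
    (i : ι) : (b.baseChange Y).repr (Algebra.TensorProduct.map φ (AlgHom.id S B) y) i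
      = φ ((b.baseChange X).repr y i) := by
  induction y with
  | zero => simp
  | add x y hx hy => simp only [map_add, Finsupp.add_apply, hx, hy]
  | tmul x a => simp

lemma map_inj {S X Y B ι : Type*} [CommRing S] [CommRing X] [Algebra S X] [CommRing Y]
    [Algebra S Y] [Ring B] [Algebra S B] (b : Module.Basis ι S B) (φ : X →ₐ[S] Y)
    (hφ : Function.Injective φ) :
    Function.Injective (Algebra.TensorProduct.map φ (AlgHom.id S B)) := by
  intro x y hxy
  apply (b.baseChange X).repr.injective
  ext i
  apply hφ
  rw [← coord_map, ← coord_map, hxy]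

lemma map_eq_zero_iff_coord {S X Y B ι : Type*} [CommRing S] [CommRing X] [Algebra S X]
    [CommRing Y]
    [Algebra S Y] [Ring B] [Algebra S B] (b : Module.Basis ι S B) (φ : X →ₐ[S] Y) (y : X ⊗[S] B) :
    Algebra.TensorProduct.map φ (AlgHom.id S B) y = 0 ↔
      ∀ i, φ ((b.baseChange X).repr y i) = 0 := by
  rw [← (b.baseChange Y).repr.map_eq_zero_iff, Finsupp.ext_iff]
  simp [coord_map]

lemma nak {Q M : Type*} [CommRing Q] [AddCommGroup M] [Module Q M] [Module.Finite Q M]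
    (P : M →ₗ[Q] M) (hP : ∀ x, P (P x) = P x)
    (h : ∀ x, P x ∈ (Ideal.jacobson ⊥ : Ideal Q) • (⊤ : Submodule Q M)) (x : M) : P x = 0 := by
  have hN : (LinearMap.range P).FG := (Module.Finite.iff_fg).1 inferInstance
  have : LinearMap.range P = ⊥ := by
    refine Submodule.eq_bot_of_le_smul_of_le_jacobson_bot (Ideal.jacobson ⊥) _ hN ?_ le_rfl
    rintro _ ⟨y, rfl⟩
    rw [← hP]
    have := Submodule.mem_map_of_mem (f := P) (h y)
    rwa [Submodule.map_smul'', Submodule.map_top] at this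
  have hx : P x ∈ LinearMap.range P := ⟨x, rfl⟩
  rw [this] at hx
  exact hx

lemma nak_coord {S X B ι : Type*} [CommRing S] [CommRing X] [Algebra S X] [Ring B] [Algebra S B]
    [Finite ι] (b : Module.Basis ι S B) (P : X ⊗[S] B →ₗ[X] X ⊗[S] B) (hP : ∀ x, P (P x) = P x)
    (h : ∀ (n : Ideal X), n.IsMaximal → ∀ x i, (b.baseChange X).repr (P x) i ∈ n)
    (x : X ⊗[S] B) : P x = 0 := by
  have : Module.Finite X (X ⊗[S] B) := Module.Finite.of_basis (b.baseChange X)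
  refine nak P hP (fun x => ?_) x
  have := Fintype.ofFinite ι
  rw [← (b.baseChange X).sum_repr (P x)]
  refine Submodule.sum_mem _ fun i _ => Submodule.smul_mem_smul ?_ trivial
  rw [Ideal.jacobson, Ideal.mem_sInf]
  intro n hn
  exact h n hn.2 x i

/-- idempotents congruent modulo all maximal ideals are equal -/
lemma ci_eq {S X B ι : Type*} [CommRing S] [CommRing X] [Algebra S X] [Ring B] [Algebra S B]
    [Finite ι] (b : Module.Basis ι S B) (e f : X ⊗[S] B) (he : IsCI e) (hf : IsCI f)
    (h : ∀ (n : Ideal X), n.IsMaximal → ∀ i, (b.baseChange X).repr (e - f) i ∈ n) : e = f := by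
  have key : ∀ e f : X ⊗[S] B, IsCI e → IsCI f →
      (∀ (n : Ideal X), n.IsMaximal → ∀ i, (b.baseChange X).repr (e - f) i ∈ n) → e = e * f := by
    intro e f he hf h
    have hz := nak_coord b (LinearMap.mulLeft X (e * (1 - f))) (fun x => by
        show e * (1 - f) * (e * (1 - f) * x) = e * (1 - f) * x
        have hcm : Commute (1 - f) e := (he.2 _).symm
        rw [← mul_assoc, hcm.mul_mul_mul_comm, he.1.eq, hf.1.one_sub.eq]) (fun n hn x i => by
        let φ : X →ₐ[S] X ⧸ n := Ideal.Quotient.mkₐ S n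
        let π := Algebra.TensorProduct.map φ (AlgHom.id S B)
        have h1 : π (e - f) = 0 := (map_eq_zero_iff_coord b φ _).2 fun i =>
          Ideal.Quotient.eq_zero_iff_mem.2 (h n hn i)
        have h2 : π (e * (1 - f) * x) = 0 := by
          have : e * (1 - f) = (e - f) * (1 - f) := by
            rw [sub_mul, mul_sub f, hf.1.eq]; simp
          rw [this, map_mul, map_mul, h1, zero_mul, zero_mul]
        exact Ideal.Quotient.eq_zero_iff_mem.1 ((map_eq_zero_iff_coord b φ _).1 h2 i)) 1
    simp only [LinearMap.mulLeft_apply, mul_one, mul_sub] at hz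
    exact sub_eq_zero.1 hz
  rw [key e f he hf h, he.2 f, ← key f e hf he]
  intro n hn i
  rw [← neg_sub, map_neg, Finsupp.neg_apply]
  exact n.neg_mem (h n hn i)

lemma ci_eq' {S X B ι : Type*} [CommRing S] [CommRing X] [Algebra S X] [Ring B] [Algebra S B]
    [Finite ι] (b : Module.Basis ι S B) (e f x : X ⊗[S] B) (he : IsCI e) (hf : IsCI f)
    (h1 : ∀ (n : Ideal X), n.IsMaximal → ∀ i, (b.baseChange X).repr (e - x) i ∈ n)
    (h2 : ∀ (n : Ideal X), n.IsMaximal → ∀ i, (b.baseChange X).repr (f - x) i ∈ n) : e = f := by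
  refine ci_eq b _ _ he hf fun n hn i => ?_
  rw [← sub_sub_sub_cancel_right _ _ x, map_sub, Finsupp.sub_apply]
  exact n.sub_mem (h1 n hn i) (h2 n hn i)

lemma descent {S D B ι : Type*} [CommRing S] [IsLocalRing S] [CommRing D] [IsLocalRing D]
    [Algebra S D] [Algebra.IsIntegral S D] (hinj : Function.Injective (algebraMap S D))
    [Ring B] [Algebra S B] [Finite ι] (b : Module.Basis ι S B) (e : D ⊗[S] B) (he : IsCI e)
    (x : B) (hx : ∀ i, (b.baseChange D).repr (e - 1 ⊗ₜ x) i ∈ IsLocalRing.maximalIdeal D) :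
    ∃ e0 : B, IsCI e0 ∧ ∀ i, b.repr (e0 - x) i ∈ IsLocalRing.maximalIdeal S := by
  let c : ι → D := fun i => (b.baseChange D).repr e i
  let T : Subalgebra S D := Algebra.adjoin S (Set.range c)
  let c' : ι → T := fun i => ⟨c i, Algebra.subset_adjoin ⟨i, rfl⟩⟩
  let e' : T ⊗[S] B := (b.baseChange T).repr.symm (Finsupp.equivFunOnFinite.symm c')
  have hce' : ∀ i, (b.baseChange T).repr e' i = c' i := fun i => by simp [e']
  let π := Algebra.TensorProduct.map T.val (AlgHom.id S B)
  have hπ : Function.Injective π := map_inj b T.val Subtype.val_injective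
  have hπe : π e' = e := by
    apply (b.baseChange D).repr.injective
    ext i
    rw [coord_map, hce']; rfl
  have he' : IsCI e' := by
    refine ⟨hπ ?_, fun y => hπ ?_⟩
    · rw [map_mul, hπe, he.1.eq]
    · rw [map_mul, map_mul, hπe, he.2]
  have hfin : Module.Finite S T := by
    refine Module.Finite.iff_fg.2 (fg_adjoin_of_finite (Set.finite_range c) ?_)
    intro y _
    exact Algebra.IsIntegral.isIntegral y
  have hx' : ∀ i, ((b.baseChange T).repr (e' - 1 ⊗ₜ x) i : D) ∈ IsLocalRing.maximalIdeal D := by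
    intro i
    have := hx i
    rwa [show e - 1 ⊗ₜ x = π (e' - 1 ⊗ₜ x) by rw [map_sub, hπe]; simp [π], coord_map] at this
  have hTD : Algebra.IsIntegral T D := Algebra.IsIntegral.tower_top S
  have hmax : ∀ N : Ideal T, N.IsMaximal → ∀ i, (b.baseChange T).repr (e' - 1 ⊗ₜ x) i ∈ N := by
    intro N hN i
    obtain ⟨Q, hQ, hQN⟩ := Ideal.exists_ideal_over_maximal_of_isIntegral (S := D) N (by
      rw [(RingHom.injective_iff_ker_eq_bot _).1]; exact bot_le
      exact Subtype.val_injective)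
    rw [← hQN, Ideal.mem_comap, IsLocalRing.eq_maximalIdeal hQ]
    exact hx' i
  -- two pullbacks
  let i1 : T →ₐ[S] T ⊗[S] T := Algebra.TensorProduct.includeLeft
  let i2 : T →ₐ[S] T ⊗[S] T := Algebra.TensorProduct.includeRight
  have hint : ∀ j : T →ₐ[S] T ⊗[S] T, ∀ n : Ideal (T ⊗[S] T), n.IsMaximal →
      (n.comap (j : T →+* T ⊗[S] T)).IsMaximal := by
    intro j n hn
    have hj : (j : T →+* T ⊗[S] T).IsIntegral := by
      have h1 : Algebra.IsIntegral S (T ⊗[S] T) := inferInstance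
      have h2 : (algebraMap S (T ⊗[S] T)).IsIntegral := fun y => Algebra.IsIntegral.isIntegral y
      rw [← j.comp_algebraMap] at h2
      exact RingHom.IsIntegral.tower_top _ _ h2
    exact Ideal.isMaximal_comap_of_isIntegral_of_isMaximal' _ hj n
  let E : (T →ₐ[S] T ⊗[S] T) → (T ⊗[S] T) ⊗[S] B := fun j =>
    Algebra.TensorProduct.map j (AlgHom.id S B) e'
  have hE : ∀ j, IsCI (E j) := by
    intro j
    refine isCI_of_tmul ?_ ?_
    · show _ * _ = _
      rw [← map_mul, he'.1.eq]
    · intro y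
      have : (1 : T ⊗[S] T) ⊗ₜ[S] y = Algebra.TensorProduct.map j (AlgHom.id S B) (1 ⊗ₜ y) := by
        simp
      rw [this, ← map_mul, ← map_mul, he'.2]
  have hE2 : ∀ j, ∀ n : Ideal (T ⊗[S] T), n.IsMaximal → ∀ i,
      (b.baseChange (T ⊗[S] T)).repr (E j - 1 ⊗ₜ x) i ∈ n := by
    intro j n hn i
    have : E j - 1 ⊗ₜ x = Algebra.TensorProduct.map j (AlgHom.id S B) (e' - 1 ⊗ₜ x) := by
      simp [E]
    rw [this, coord_map]
    exact hmax _ (hint j n hn) i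
  have hEE : E i1 = E i2 := ci_eq' b _ _ (1 ⊗ₜ x) (hE _) (hE _) (hE2 _) (hE2 _)
  have hc : ∀ i, c' i ⊗ₜ[S] (1 : T) = 1 ⊗ₜ c' i := by
    intro i
    have h1 := coord_map b i1 e' i
    have h2 := coord_map b i2 e' i
    have h3 : i1 (c' i) = i2 (c' i) := by
      rw [← hce', ← h1, ← h2]
      exact congrArg (fun z => (b.baseChange (T ⊗[S] T)).repr z i) hEE
    exact h3
  have hepi : Algebra.IsEpi S T := by
    rw [Algebra.isEpi_iff_forall_one_tmul_eq]
    have hle : ∀ y (hy : y ∈ T), i2 ⟨y, hy⟩ = i1 ⟨y, hy⟩ := by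
      intro y hy
      induction hy using Algebra.adjoin_induction with
      | mem y hy =>
        obtain ⟨i, rfl⟩ := hy
        exact (hc i).symm
      | algebraMap r => exact (i2.commutes r).trans (i1.commutes r).symm
      | add y z hy hz h1 h2 =>
        have : (⟨y + z, T.add_mem hy hz⟩ : T) = ⟨y, hy⟩ + ⟨z, hz⟩ := rfl
        rw [this, map_add, map_add, h1, h2]
      | mul y z hy hz h1 h2 =>
        have : (⟨y * z, T.mul_mem hy hz⟩ : T) = ⟨y, hy⟩ * ⟨z, hz⟩ := rfl
        rw [this, map_mul, map_mul, h1, h2]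
    exact fun a => hle a.1 a.2
  have hsurj := Algebra.isEpi_iff_surjective_algebraMap_of_finite.1 hepi
  choose r hr using fun i => hsurj (c' i)
  let e0 : B := b.repr.symm (Finsupp.equivFunOnFinite.symm r)
  have hre0 : ∀ i, b.repr e0 i = r i := fun i => by simp [e0]
  have hee : (1 : D) ⊗ₜ[S] e0 = e := by
    apply (b.baseChange D).repr.injective
    ext i
    rw [Module.Basis.baseChange_repr_tmul, hre0, Algebra.smul_def, mul_one]
    exact congrArg Subtype.val (hr i)
  have hBD : Function.Injective (fun y : B => (1 : D) ⊗ₜ[S] y) := by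
    intro y z hyz
    apply b.repr.injective
    ext i
    have := congrArg (fun w => (b.baseChange D).repr w i) hyz
    simp only [Module.Basis.baseChange_repr_tmul, Algebra.smul_def, mul_one] at this
    exact hinj this
  refine ⟨e0, ⟨hBD ?_, fun y => hBD ?_⟩, fun i => ?_⟩
  · have := he.1.eq
    rw [← hee, Algebra.TensorProduct.tmul_mul_tmul, mul_one] at this
    exact this
  · have := he.2 (1 ⊗ₜ y)
    rw [← hee, Algebra.TensorProduct.tmul_mul_tmul, Algebra.TensorProduct.tmul_mul_tmul,
      mul_one] at this
    exact this
  · have := hx i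
    rw [← hee, ← TensorProduct.tmul_sub, Module.Basis.baseChange_repr_tmul, Algebra.smul_def,
      mul_one] at this
    rw [IsLocalRing.mem_maximalIdeal, mem_nonunits_iff] at this ⊢
    exact fun hu => this (hu.map _)

open Polynomial in
lemma coprime_prod {V : Type*} [CommRing V] (s t : Multiset V)
    (h : ∀ a ∈ s, ∀ b ∈ t, IsUnit (a - b)) :
    IsCoprime (s.map (fun a => X - C a)).prod (t.map (fun a => X - C a)).prod := by
  induction s using Multiset.induction with
  | empty => simpa using isCoprime_one_left
  | cons a s ih =>
    rw [Multiset.map_cons, Multiset.prod_cons]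
    refine IsCoprime.mul_left ?_ (ih fun a' ha' => h a' (Multiset.mem_cons_of_mem ha'))
    have ha := h a (Multiset.mem_cons_self a s)
    clear ih h
    induction t using Multiset.induction with
    | empty => simpa using isCoprime_one_right
    | cons c t ih =>
      rw [Multiset.map_cons, Multiset.prod_cons]
      exact IsCoprime.mul_right (isCoprime_X_sub_C_of_isUnit_sub (ha c (Multiset.mem_cons_self c t)))
        (ih fun c' hc' => ha c' (Multiset.mem_cons_of_mem hc'))

open Polynomial in
lemma lift_idem {S V B ι : Type*} [CommRing S] [CommRing V] [IsLocalRing V]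
    [Algebra S V] [Ring B] [Algebra S B] [Finite ι] (b : Module.Basis ι S B) (x : B)
    (f : S[X]) (s : Multiset V)
    (hs : f.map (algebraMap S V) = (s.map (fun a => X - C a)).prod) (h0 : 0 ∈ s) (h1 : 1 ∈ s)
    (hfx : aeval x f = 0)
    (hxx : ∀ i, algebraMap S V (b.repr (x * x - x) i) ∈ IsLocalRing.maximalIdeal V)
    (hxc : ∀ y i, algebraMap S V (b.repr (x * y - y * x) i) ∈ IsLocalRing.maximalIdeal V) :
    ∃ e : V ⊗[S] B, IsCI e ∧
      ∀ i, (b.baseChange V).repr (e - 1 ⊗ₜ x) i ∈ IsLocalRing.maximalIdeal V := by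
  classical
  let m := IsLocalRing.maximalIdeal V
  let s1 := s.filter (fun a => a - 1 ∈ m)
  let s0 := s.filter (fun a => ¬ (a - 1 ∈ m))
  let f1 : V[X] := (s1.map (fun a => X - C a)).prod
  let f0 : V[X] := (s0.map (fun a => X - C a)).prod
  have hf : f1 * f0 = f.map (algebraMap S V) := by
    rw [hs, ← Multiset.prod_add, ← Multiset.map_add, Multiset.filter_add_not]
  have hcop : IsCoprime f1 f0 := by
    refine coprime_prod _ _ fun a ha c hc => ?_
    by_contra hu
    have hu' : a - c ∈ m := (IsLocalRing.mem_maximalIdeal _).2 hu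
    refine (Multiset.mem_filter.1 hc).2 ?_
    have := m.sub_mem (Multiset.mem_filter.1 ha).2 hu'
    rwa [show a - 1 - (a - c) = c - 1 by ring] at this
  have hf10 : f1.eval 1 = 0 := by
    have : (1 : V) ∈ s1 := Multiset.mem_filter.2 ⟨h1, by simp⟩
    rw [eval_multiset_prod]
    refine Multiset.prod_eq_zero (Multiset.mem_map.2 ⟨X - C 1, Multiset.mem_map.2 ⟨1, this, rfl⟩, ?_⟩)
    simp
  have hf00 : f0.eval 0 = 0 := by
    have : (0 : V) ∈ s0 := Multiset.mem_filter.2 ⟨h0, by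
      rw [zero_sub, neg_mem_iff]
      exact fun h => (Ideal.ne_top_iff_one m).1 (Ideal.IsPrime.ne_top inferInstance) h⟩
    rw [eval_multiset_prod]
    refine Multiset.prod_eq_zero (Multiset.mem_map.2 ⟨X - C 0, Multiset.mem_map.2 ⟨0, this, rfl⟩, ?_⟩)
    simp
  obtain ⟨u, v, huv⟩ := hcop
  let p := v * f0
  have hp0 : p.eval 0 = 0 := by simp [p, hf00]
  have hp1 : p.eval 1 = 1 := by
    have := congrArg (eval 1) huv
    simpa [hf10, p] using this
  obtain ⟨q, hq⟩ : ∃ q, p = X + (X * X - X) * q := by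
    have hr : (p - X).IsRoot 0 := by simp [hp0]
    obtain ⟨q1, hq1⟩ := dvd_iff_isRoot.2 hr
    have hr1 : q1.IsRoot 1 := by
      have := congrArg (eval 1) hq1
      simp [hp1] at this
      exact this.symm
    obtain ⟨q2, hq2⟩ := dvd_iff_isRoot.2 hr1
    refine ⟨q2, ?_⟩
    rw [← sub_eq_iff_eq_add', hq1, hq2]
    simp only [map_zero, map_one]
    ring
  let x' : V ⊗[S] B := 1 ⊗ₜ x
  let e : V ⊗[S] B := aeval x' p
  have hfx' : aeval x' (f1 * f0) = 0 := by
    rw [hf, aeval_map_algebraMap]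
    have : x' = (Algebra.TensorProduct.includeRight : B →ₐ[S] V ⊗[S] B) x := rfl
    rw [this, aeval_algHom_apply, hfx, map_zero]
  have hei : e * e = e := by
    have h2 : p * p = p - (u * v) * (f1 * f0) := by
      have : p * (u * f1 + v * f0) = p := by rw [huv, mul_one]
      linear_combination this
    show aeval x' p * aeval x' p = aeval x' p
    rw [← map_mul, h2, map_sub, map_mul _ (u * v), hfx', mul_zero, sub_zero]
  let φ : V →ₐ[S] V ⧸ m := Ideal.Quotient.mkₐ S m
  let π := Algebra.TensorProduct.map φ (AlgHom.id S B)
  have hπB : ∀ z : B, (∀ i, algebraMap S V (b.repr z i) ∈ m) → π (1 ⊗ₜ z) = 0 := by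
    intro z hz
    refine (map_eq_zero_iff_coord b φ _).2 fun i => ?_
    rw [Module.Basis.baseChange_repr_tmul, Algebra.smul_def, mul_one]
    exact Ideal.Quotient.eq_zero_iff_mem.2 (hz i)
  have hπxx : π (x' * x' - x') = 0 := by
    have : x' * x' - x' = 1 ⊗ₜ (x * x - x) := by simp [x', TensorProduct.tmul_sub]
    rw [this]; exact hπB _ hxx
  have hπe : π e = π x' := by
    have : e = x' + (x' * x' - x') * aeval x' q := by
      show aeval x' p = _
      rw [hq]; simp
    rw [this, map_add, map_mul, hπxx, zero_mul, add_zero]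
  have hπci : IsCI (π x') := by
    refine isCI_of_tmul ?_ ?_
    · show _ * _ = _
      rw [← map_mul, ← sub_eq_zero, ← map_sub, hπxx]
    · intro y
      have : (1 : V ⧸ m) ⊗ₜ[S] y = π (1 ⊗ₜ y) := by simp [π]
      rw [this, ← map_mul, ← map_mul, ← sub_eq_zero, ← map_sub]
      have : x' * 1 ⊗ₜ y - 1 ⊗ₜ y * x' = 1 ⊗ₜ (x * y - y * x) := by
        simp [x', TensorProduct.tmul_sub]
      rw [this]; exact hπB _ (hxc y)
  have hcoord : ∀ z, π z = 0 → ∀ i, (b.baseChange V).repr z i ∈ m := fun z hz i =>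
    Ideal.Quotient.eq_zero_iff_mem.1 ((map_eq_zero_iff_coord b φ _).1 hz i)
  have hei1 : e * (1 - e) = 0 := by rw [mul_sub, hei, mul_one, sub_self]
  have hei2 : (1 - e) * e = 0 := by rw [sub_mul, hei, one_mul, sub_self]
  have hei3 : (1 - e) * (1 - e) = 1 - e := by rw [mul_sub, hei2]; simp
  have hA : ∀ y, e * (y * (1 - e)) = 0 := by
    refine nak_coord b ((LinearMap.mulLeft V e).comp (LinearMap.mulRight V (1 - e))) ?_ ?_
    · intro y
      show e * ((e * (y * (1 - e))) * (1 - e)) = e * (y * (1 - e))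
      simp only [← mul_assoc, hei]
      rw [mul_assoc _ (1 - e), hei3]
    · intro n hn y i
      rw [IsLocalRing.eq_maximalIdeal hn]
      refine hcoord _ ?_ i
      show π (e * (y * (1 - e))) = 0
      rw [map_mul, map_mul, hπe, hπci.2, mul_assoc, ← hπe, ← map_mul, hei2, map_zero, mul_zero]
  have hB : ∀ y, (1 - e) * (y * e) = 0 := by
    refine nak_coord b ((LinearMap.mulLeft V (1 - e)).comp (LinearMap.mulRight V e)) ?_ ?_
    · intro y
      show (1 - e) * (((1 - e) * (y * e)) * e) = (1 - e) * (y * e)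
      simp only [← mul_assoc, hei3]
      rw [mul_assoc _ e, hei]
    · intro n hn y i
      rw [IsLocalRing.eq_maximalIdeal hn]
      refine hcoord _ ?_ i
      show π ((1 - e) * (y * e)) = 0
      rw [map_mul, map_mul, hπe, ← hπci.2, ← mul_assoc, ← hπe, ← map_mul, hei2, map_zero, zero_mul]
  refine ⟨e, ⟨hei, fun y => ?_⟩, fun i => hcoord _ ?_ i⟩
  · have h1 := hA y
    have h2 := hB y
    rw [mul_sub, mul_sub, mul_one, sub_eq_zero] at h1
    rw [sub_mul, one_mul, sub_eq_zero] at h2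
    exact h1.trans h2.symm
  · rw [map_sub, hπe, sub_self]

open Polynomial in
lemma hs_lemma {S T V L : Type*} [CommRing S] [CommRing V] [Algebra S V] [CommRing L] [Algebra S L]
    (f : S[X]) (rt : Multiset L)
    (hroots : f.map (algebraMap S L) = (rt.map (fun a => X - C a)).prod) (u : T → L)
    (sT : Multiset T) (hsT : sT.map u = rt) (i : T → V) (j : V →ₐ[S] L)
    (hjinj : Function.Injective j) (hj : ∀ t, j (i t) = u t) :
    f.map (algebraMap S V) = ((sT.map i).map (fun a => X - C a)).prod := by
  apply Polynomial.map_injective (j : V →+* L) hjinj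
  rw [Polynomial.map_map, j.comp_algebraMap, Polynomial.map_multiset_prod, hroots, ← hsT]
  simp only [Multiset.map_map]
  congr 1
  refine Multiset.map_congr rfl fun t _ => ?_
  simp only [Function.comp, Polynomial.map_sub, Polynomial.map_X, Polynomial.map_C]
  congr 2
  exact (hj t).symm

open Polynomial in
lemma core_abs {S D V K L B ι : Type*} [CommRing S] [IsLocalRing S] [CommRing D] [IsLocalRing D]
    [Algebra S D] [Algebra.IsIntegral S D] (hSD : Function.Injective (algebraMap S D))
    [CommRing V] [IsLocalRing V] [Algebra S V]
    [Field K] [Algebra S K] [Field L] [Algebra K L] [IsAlgClosed L]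
    [Algebra S L] [IsScalarTower S K L] [Algebra D K]
    (j : V →ₐ[S] L) (hjinj : Function.Injective j) (g : D →ₐ[S] V)
    (hg : Function.Injective g)
    (hjg : ∀ a : D, j (g a) = algebraMap K L (algebraMap D K a))
    (hmV : ∀ r ∈ IsLocalRing.maximalIdeal S, algebraMap S V r ∈ IsLocalRing.maximalIdeal V)
    (hint : ∀ a : L, IsIntegral S a → ∃ v, j v = a)
    (hnorm : ∀ (c : K) (v : V), algebraMap K L c = j v → ∃ d : D, algebraMap D K d = c)
    [Ring B] [Algebra S B] [Finite ι] (b : Module.Basis ι S B)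
    (hK : ∀ e : L ⊗[S] B, IsCI e → ∃ c : K ⊗[S] B,
      Algebra.TensorProduct.map (IsScalarTower.toAlgHom S K L) (AlgHom.id S B) c = e)
    (x : B) (hxx : ∀ i, b.repr (x * x - x) i ∈ IsLocalRing.maximalIdeal S)
    (hxc : ∀ y i, b.repr (x * y - y * x) i ∈ IsLocalRing.maximalIdeal S) :
    ∃ e0 : B, IsCI e0 ∧ ∀ i, b.repr (e0 - x) i ∈ IsLocalRing.maximalIdeal S := by
  classical
  have : Module.Finite S B := Module.Finite.of_basis b
  obtain ⟨f0, hf0m, hf0x⟩ := IsIntegral.of_finite S x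
  let f : S[X] := X * (X - C 1) * f0
  have hfm : f.Monic := (monic_X.mul (monic_X_sub_C 1)).mul hf0m
  have hfx : aeval x f = 0 := by
    have : aeval x f0 = 0 := hf0x
    simp [f, this]
  let fL := f.map (algebraMap S L)
  have hfLm : fL.Monic := hfm.map _
  have hroots : fL = (fL.roots.map (fun a : L => (X - C a : L[X]))).prod :=
    ((IsAlgClosed.splits fL).eq_prod_roots_of_monic hfLm)
  have hrint : ∀ a ∈ fL.roots, ∃ v, j v = a := by
    intro a ha
    exact hint a ⟨f, hfm, by
      have := (mem_roots hfLm.ne_zero).1 ha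
      rwa [IsRoot, eval_map] at this⟩
  obtain ⟨s, hsT⟩ : ∃ s : Multiset V, s.map j = fL.roots :=
    ⟨fL.roots.attach.map (fun a => (hrint a.1 a.2).choose), by
      rw [Multiset.map_map]
      refine Eq.trans (Multiset.map_congr rfl fun a _ => ?_) (Multiset.attach_map_val _)
      exact (hrint a.1 a.2).choose_spec⟩
  have hmemT : ∀ t : V, fL.IsRoot (j t) → t ∈ s := by
    intro t ht
    have : j t ∈ fL.roots := (mem_roots hfLm.ne_zero).2 ht
    rw [← hsT, Multiset.mem_map] at this
    obtain ⟨t', ht', h⟩ := this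
    rwa [← hjinj h]
  have hs := hs_lemma f fL.roots hroots j s hsT (fun v : V => v) j hjinj (fun _ => rfl)
  rw [Multiset.map_id'] at hs
  have h0 : (0 : V) ∈ s := hmemT 0 (by simp [fL, f])
  have h1 : (1 : V) ∈ s := hmemT 1 (by simp [fL, f])
  obtain ⟨eV, heV, heVx⟩ := lift_idem b x f s hs h0 h1 hfx (fun i => hmV _ (hxx i))
    (fun y i => hmV _ (hxc y i))
  let πL := Algebra.TensorProduct.map j (AlgHom.id S B)
  have heL : IsCI (πL eV) := by
    refine isCI_of_tmul ?_ ?_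
    · show _ * _ = _
      rw [← map_mul, heV.1.eq]
    · intro y
      have : (1 : L) ⊗ₜ[S] y = πL (1 ⊗ₜ y) := by simp [πL]
      rw [this, ← map_mul, ← map_mul, heV.2]
  obtain ⟨c, hc⟩ := hK _ heL
  have hcc : ∀ i, algebraMap K L ((b.baseChange K).repr c i) = j ((b.baseChange V).repr eV i) := by
    intro i
    have h1 := coord_map b j eV i
    have h2 := coord_map b (IsScalarTower.toAlgHom S K L) c i
    rw [hc] at h2
    exact h2.symm.trans h1
  have hd : ∀ i, ∃ d : D, algebraMap D K d = (b.baseChange K).repr c i :=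
    fun i => hnorm _ _ (hcc i)
  choose d hd using hd
  let eD : D ⊗[S] B := (b.baseChange D).repr.symm (Finsupp.equivFunOnFinite.symm d)
  have hceD : ∀ i, (b.baseChange D).repr eD i = d i := fun i => by simp [eD]
  let πg := Algebra.TensorProduct.map g (AlgHom.id S B)
  have hπg : Function.Injective πg := map_inj b g hg
  have hgeD : πg eD = eV := by
    apply (b.baseChange V).repr.injective
    ext i
    apply hjinj
    rw [coord_map, hjg, hceD, hd, hcc]
  have heD : IsCI eD := by
    refine ⟨hπg ?_, fun y => hπg ?_⟩
    · rw [map_mul, hgeD, heV.1.eq]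
    · rw [map_mul, map_mul, hgeD, heV.2]
  refine descent hSD b eD heD x fun i => ?_
  have h3 := heVx i
  rw [show eV - 1 ⊗ₜ x = πg (eD - 1 ⊗ₜ x) by rw [map_sub, hgeD]; simp [πg], coord_map] at h3
  rw [IsLocalRing.mem_maximalIdeal, mem_nonunits_iff] at h3 ⊢
  exact fun hu => h3 (hu.map g)

lemma exists_V {S D K : Type*} {L : Type w} [CommRing S] [IsLocalRing S] [CommRing D] [IsDomain D]
    [IsLocalRing D] [IsIntegrallyClosed D]
    [Algebra S D] [Algebra.IsIntegral S D]
    [Field K] [Field L] [Algebra K L]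
    [Algebra S L] [Algebra D K] [IsFractionRing D K] [Algebra D L] [IsScalarTower D K L]
    [IsScalarTower S D L] :
    ∃ (V : Type w) (_ : CommRing V) (_ : IsLocalRing V) (_ : Algebra S V) (j : V →ₐ[S] L)
      (g : D →ₐ[S] V), Function.Injective j ∧ Function.Injective g ∧
      (∀ a : D, j (g a) = algebraMap K L (algebraMap D K a)) ∧
      (∀ r ∈ IsLocalRing.maximalIdeal S, algebraMap S V r ∈ IsLocalRing.maximalIdeal V) ∧
      (∀ a : L, IsIntegral S a → ∃ v, j v = a) ∧
      (∀ (c : K) (v : V), algebraMap K L c = j v → ∃ d : D, algebraMap D K d = c) := by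
  let T := integralClosure D L
  obtain ⟨n, hn⟩ := Ideal.exists_maximal T
  let V := Localization.AtPrime n
  have hST : Algebra.IsIntegral S T := Algebra.IsIntegral.trans (R := S) D
  have hnS : n.comap (algebraMap S T) = IsLocalRing.maximalIdeal S :=
    IsLocalRing.eq_maximalIdeal (Ideal.isMaximal_comap_of_isIntegral_of_isMaximal n)
  have hunit : ∀ y : n.primeCompl, IsUnit (algebraMap T L y) := by
    intro y
    refine IsUnit.mk0 _ fun h => y.2 ?_
    have : (y : T) = 0 := Subtype.ext h
    rw [this]; exact n.zero_mem
  let j0 : V →+* L := IsLocalization.lift hunit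
  have hj0 : ∀ t : T, j0 (algebraMap T V t) = t := fun t => IsLocalization.lift_eq hunit t
  have hjinj : Function.Injective j0 := by
    rw [injective_iff_map_eq_zero]
    intro v hv
    obtain ⟨⟨t, y⟩, h⟩ := IsLocalization.surj n.primeCompl v
    have h1 := congrArg j0 h
    simp only [map_mul, hv, zero_mul, hj0] at h1
    have h2 : t = 0 := Subtype.ext h1.symm
    rw [h2, map_zero] at h
    exact (IsLocalization.map_units V y).mul_left_eq_zero.1 h
  have hjg : ∀ a : D, j0 (algebraMap D V a) = algebraMap K L (algebraMap D K a) := by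
    intro a
    rw [IsScalarTower.algebraMap_apply D T V, hj0, ← IsScalarTower.algebraMap_apply D K L]; rfl
  refine ⟨V, inferInstance, inferInstance, inferInstance, { j0 with
    commutes' := fun r => by
      show j0 (algebraMap S V r) = _
      rw [IsScalarTower.algebraMap_apply S T V, hj0, IsScalarTower.algebraMap_apply S D T,
        IsScalarTower.algebraMap_apply S D L]; rfl },
    IsScalarTower.toAlgHom S D V, hjinj, ?_, hjg, ?_, ?_, ?_⟩
  · intro a a' h
    have := congrArg j0 h
    change j0 (algebraMap D V a) = j0 (algebraMap D V a') at this
    rw [hjg, hjg] at this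
    exact IsFractionRing.injective D K ((algebraMap K L).injective this)
  · intro r hr
    rw [← hnS, Ideal.mem_comap] at hr
    rw [IsScalarTower.algebraMap_apply S T V]
    exact (IsLocalization.AtPrime.to_map_mem_maximal_iff V n _).2 hr
  · intro a ha
    exact ⟨algebraMap T V ⟨a, ha.tower_top⟩, hj0 _⟩
  · intro c v hcv
    obtain ⟨⟨t, y⟩, h⟩ := IsLocalization.surj n.primeCompl v
    refine norm_lemma (D := D) (L := L) n y y.2 _ ?_
    have h2 := congrArg j0 h
    rw [map_mul, hj0, hj0] at h2
    rw [hcv]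
    change IsIntegral D (j0 v * _)
    rw [h2]
    exact t.2

lemma core {S K L B ι : Type*} [CommRing S] [IsDomain S] [IsLocalRing S]
    [Field K] [Algebra S K] [IsFractionRing S K] [Field L] [Algebra K L] [IsAlgClosed L]
    [Algebra S L] [IsScalarTower S K L] (huni : IsLocalRing (integralClosure S K))
    [Ring B] [Algebra S B] [Finite ι] (b : Module.Basis ι S B)
    (hK : ∀ e : L ⊗[S] B, IsCI e → ∃ c : K ⊗[S] B,
      Algebra.TensorProduct.map (IsScalarTower.toAlgHom S K L) (AlgHom.id S B) c = e)
    (x : B) (hxx : ∀ i, b.repr (x * x - x) i ∈ IsLocalRing.maximalIdeal S)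
    (hxc : ∀ y i, b.repr (x * y - y * x) i ∈ IsLocalRing.maximalIdeal S) :
    ∃ e0 : B, IsCI e0 ∧ ∀ i, b.repr (e0 - x) i ∈ IsLocalRing.maximalIdeal S := by
  have : Algebra.IsAlgebraic S K :=
    (IsFractionRing.comap_isAlgebraic_iff (A := S) (K := K) (C := K)).2 inferInstance
  have : IsFractionRing (integralClosure S K) K := integralClosure.isFractionRing_of_algebraic
    (A := S) (L := K) (fun x hx => by simpa using hx)
  have : IsIntegrallyClosed (integralClosure S K) :=
    (isIntegrallyClosed_iff_isIntegrallyClosedIn K).2 inferInstance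
  have hSD : Function.Injective (algebraMap S (integralClosure S K)) := by
    have := IsFractionRing.injective S K
    rw [IsScalarTower.algebraMap_eq S (integralClosure S K) K, RingHom.coe_comp] at this
    exact Function.Injective.of_comp this
  obtain ⟨V, _, _, _, j, g, h1, h2, h3, h4, h5, h6⟩ :=
    exists_V (S := S) (D := integralClosure S K) (K := K) (L := L)
  exact core_abs hSD j h1 g h2 h3 h4 h5 h6 b hK x hxx hxc

/-- cancellation of base change, for noncommutative algebras -/
noncomputable def cbc (R S X A : Type*) [CommRing R] [CommRing S] [CommRing X] [Algebra R S]
    [Algebra R X] [Algebra S X] [IsScalarTower R S X] [Ring A] [Algebra R A] :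
    X ⊗[S] (S ⊗[R] A) ≃ₐ[X] X ⊗[R] A :=
  AlgEquiv.symm <| AlgEquiv.ofLinearEquiv
    (TensorProduct.AlgebraTensorModule.cancelBaseChange R S X X A).symm
    (by simp [Algebra.TensorProduct.one_def]) <|
      LinearMap.map_mul_of_map_mul_tmul (fun _ _ _ _ ↦ by simp)

lemma cbc_tmul (R S X A : Type*) [CommRing R] [CommRing S] [CommRing X] [Algebra R S]
    [Algebra R X] [Algebra S X] [IsScalarTower R S X] [Ring A] [Algebra R A] (x : X) (s : S)
    (a : A) : cbc R S X A (x ⊗ₜ (s ⊗ₜ a)) = (s • x) ⊗ₜ a :=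
  TensorProduct.AlgebraTensorModule.cancelBaseChange_tmul R S X x a s

lemma isCI_equiv {B C : Type*} [Ring B] [Ring C] (Φ : B ≃+* C) {e : B} (he : IsCI e) :
    IsCI (Φ e) := by
  refine ⟨?_, fun y => ?_⟩
  · show _ * _ = _
    rw [← map_mul, he.1.eq]
  · obtain ⟨z, rfl⟩ := Φ.surjective y
    rw [← map_mul, ← map_mul, he.2]

lemma isCI_surj {B C : Type*} [Ring B] [Ring C] (Φ : B →+* C) (hΦ : Function.Surjective Φ)
    {e : B} (he : IsCI e) : IsCI (Φ e) := by
  refine ⟨?_, fun y => ?_⟩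
  · show _ * _ = _
    rw [← map_mul, he.1.eq]
  · obtain ⟨z, rfl⟩ := hΦ y
    rw [← map_mul, ← map_mul, he.2]

lemma IsCI.mul' {B : Type*} [Ring B] {e f : B} (he : IsCI e) (hf : IsCI f) : IsCI (e * f) := by
  refine ⟨?_, fun y => ?_⟩
  · have hc : Commute f e := hf.2 e
    show _ = _
    rw [hc.mul_mul_mul_comm, he.1.eq, hf.1.eq]
  · rw [mul_assoc, hf.2, ← mul_assoc, he.2, mul_assoc]

lemma IsCI.add' {B : Type*} [Ring B] {e f : B} (he : IsCI e) (hf : IsCI f) (h : e * f = 0) :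
    IsCI (e + f) := by
  refine ⟨?_, fun y => ?_⟩
  · show _ = _
    have h' : f * e = 0 := by rw [hf.2, h]
    rw [mul_add, add_mul, add_mul, h, h', he.1.eq, hf.1.eq]; simp
  · rw [add_mul, mul_add, he.2, hf.2]

lemma isCI_zero {B : Type*} [Ring B] : IsCI (0 : B) := ⟨.zero, by simp⟩

lemma blockBijective_of_ci {B C : Type*} [Ring B] [Ring C] (φ : B →+* C)
    (hφ : Function.Surjective φ) (hinj : ∀ e f, IsCI e → IsCI f → φ e = φ f → e = f)
    (hlift : ∀ c : C, IsCI c → ∃ e, IsCI e ∧ φ e = c) : BlockBijective φ := by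
  have hz : ∀ e, IsCI e → φ e = 0 → e = 0 := fun e he h => hinj e 0 he isCI_zero (by simpa using h)
  refine ⟨?_, ?_, ?_⟩
  · rintro e ⟨h1, h2, h3, h4⟩
    have he : IsCI e := ⟨h1, h3⟩
    have hφe := isCI_surj φ hφ he
    refine ⟨hφe.1, fun h => h2 (hz e he h), hφe.2, ?_⟩
    intro f g hf hg hfi hgi hfg hs
    obtain ⟨f', hf', rfl⟩ := hlift f ⟨hfi, hf⟩
    obtain ⟨g', hg', rfl⟩ := hlift g ⟨hgi, hg⟩
    have hfg' : f' * g' = 0 := hz _ (hf'.mul' hg') (by rw [map_mul, hfg])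
    have hs' : f' + g' = e := hinj _ _ (hf'.add' hg' hfg') he (by rw [map_add, hs])
    rcases h4 f' g' hf'.2 hg'.2 hf'.1 hg'.1 hfg' hs' with rfl | rfl
    · exact Or.inl (map_zero _)
    · exact Or.inr (map_zero _)
  · rintro e he f hf h
    exact hinj e f ⟨he.1, he.2.2.1⟩ ⟨hf.1, hf.2.2.1⟩ h
  · rintro c ⟨h1, h2, h3, h4⟩
    obtain ⟨e, he, rfl⟩ := hlift c ⟨h1, h3⟩
    refine ⟨e, ⟨he.1, fun h => h2 (by rw [h, map_zero]), he.2, ?_⟩, rfl⟩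
    intro f g hf hg hfi hgi hfg hs
    have hF := isCI_surj φ hφ (⟨hfi, hf⟩ : IsCI f)
    have hG := isCI_surj φ hφ (⟨hgi, hg⟩ : IsCI g)
    rcases h4 (φ f) (φ g) hF.2 hG.2 hF.1 hG.1 (by rw [← map_mul, hfg, map_zero])
      (by rw [← map_add, hs]) with h | h
    · exact Or.inl (hz _ ⟨hfi, hf⟩ h)
    · exact Or.inr (hz _ ⟨hgi, hg⟩ h)

lemma ci_eq_base {S B ι : Type*} [CommRing S] [IsLocalRing S] [Ring B] [Algebra S B]
    [Finite ι] (b : Module.Basis ι S B) (e f : B) (he : IsCI e) (hf : IsCI f)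
    (h : ∀ i, b.repr (e - f) i ∈ IsLocalRing.maximalIdeal S) : e = f := by
  have hci : ∀ e : B, IsCI e → IsCI ((1 : S) ⊗ₜ[S] e) := by
    intro e he
    refine isCI_of_tmul ?_ ?_
    · simp only [IsIdempotentElem, Algebra.TensorProduct.tmul_mul_tmul, mul_one, he.1.eq]
    · intro y
      simp only [Algebra.TensorProduct.tmul_mul_tmul, mul_one, he.2 y]
  have := ci_eq b ((1 : S) ⊗ₜ[S] e) (1 ⊗ₜ f) (hci e he) (hci f hf) (fun n hn i => by
    rw [← TensorProduct.tmul_sub, Module.Basis.baseChange_repr_tmul,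
      IsLocalRing.eq_maximalIdeal hn]
    simpa using h i)
  simpa using congrArg (TensorProduct.lid S B) this

lemma isLocal_transfer {S F K : Type*} [CommRing S] [IsDomain S] [Field F] [Algebra S F]
    [IsFractionRing S F] [Field K] [Algebra S K] [IsFractionRing S K]
    (h : IsLocalRing (integralClosure S F)) : IsLocalRing (integralClosure S K) :=
  (AlgEquiv.mapIntegralClosure (IsLocalization.algEquiv (nonZeroDivisors S) F K)).toRingEquiv.isLocalRing

lemma alg_eq (R : Type*) [CommRing R] [IsDomain R] (p : Ideal R) [p.IsPrime] :
    (instAlgebraAtPrimeFractionRing _ : Algebra (Localization.AtPrime p) (FractionRing (Localization.AtPrime p))) =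
      (OreLocalization.instAlgebra : Algebra (Localization.AtPrime p) (FractionRing (Localization.AtPrime p))) := by
  apply Algebra.algebra_ext
  intro r
  refine DFunLike.congr_fun (F := Localization.AtPrime p →+* FractionRing (Localization.AtPrime p)) ?_ r
  refine IsLocalization.ringHom_ext p.primeCompl ?_
  ext x
  refine (IsLocalization.lift_eq _ _).trans ?_
  rfl

lemma isLocal2 (R : Type*) [CommRing R] [IsDomain R] (p : Ideal R) [p.IsPrime] (huni : IsLocalRing (integralClosure (Localization.AtPrime p)
      (FractionRing (Localization.AtPrime p)))) : IsLocalRing (integralClosure (Localization.AtPrime p)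
      (FractionRing R)) := by
  rw [alg_eq] at huni
  exact @isLocal_transfer (Localization.AtPrime p) (FractionRing (Localization.AtPrime p)) (FractionRing R) _ _ inferInstance OreLocalization.instAlgebra (Localization.isLocalization) _ _ _ huni

lemma main_abs {R S K L A : Type*} [CommRing R] [CommRing S] [IsDomain S] [IsLocalRing S]
    [Algebra R S] [Field K] [Algebra R K] [Algebra S K] [IsScalarTower R S K] [IsFractionRing S K]
    [Field L] [IsAlgClosed L] [Algebra K L] [Algebra S L] [IsScalarTower S K L] [Algebra R L]
    [IsScalarTower R K L] [IsScalarTower R S L] [Ring A] [Algebra R A]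
    [Module.Finite R A] [Module.Flat R A]
    (hsplit : numBlocks (K ⊗[R] A) = numBlocks (L ⊗[K] (K ⊗[R] A)))
    (huni' : IsLocalRing (integralClosure S K)) :
    BlockBijective ⇑(Algebra.TensorProduct.map
      (Ideal.Quotient.mkₐ R (IsLocalRing.maximalIdeal S))
      (AlgHom.id R A) : S ⊗[R] A →ₐ[R] IsLocalRing.ResidueField S ⊗[R] A) := by
  have hfree : Module.Free S (S ⊗[R] A) := Module.free_of_flat_of_isLocalRing
  let b := Module.Free.chooseBasis S (S ⊗[R] A)
  let φ : S ⊗[R] A →ₐ[R] (IsLocalRing.ResidueField S) ⊗[R] A := Algebra.TensorProduct.map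
      (Ideal.Quotient.mkₐ R (IsLocalRing.maximalIdeal S)) (AlgHom.id R A)
  have hφs : Function.Surjective φ :=
    Algebra.TensorProduct.map_surjective _ _ (Ideal.Quotient.mkₐ_surjective _ _)
      Function.surjective_id
  have hφΨ : ∀ y : S ⊗[R] A, cbc R S (IsLocalRing.ResidueField S) A (1 ⊗ₜ y) = φ y := by
    intro y
    induction y with
    | zero => simp
    | add y z hy hz => rw [TensorProduct.tmul_add, map_add, hy, hz, map_add]
    | tmul s a =>
      rw [cbc_tmul, Algebra.smul_def, mul_one]; rfl
  have hφ0 : ∀ y : S ⊗[R] A, φ y = 0 ↔ ∀ i, b.repr y i ∈ IsLocalRing.maximalIdeal S := by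
    intro y
    rw [← hφΨ, map_eq_zero_iff _ (cbc R S (IsLocalRing.ResidueField S) A).injective,
      ← (b.baseChange (IsLocalRing.ResidueField S)).repr.map_eq_zero_iff, Finsupp.ext_iff]
    refine forall_congr' fun i => ?_
    rw [Module.Basis.baseChange_repr_tmul, Algebra.smul_def, mul_one]
    exact IsLocalRing.residue_eq_zero_iff _
  have hK : ∀ e : L ⊗[S] (S ⊗[R] A), IsCI e → ∃ c : K ⊗[S] (S ⊗[R] A),
      Algebra.TensorProduct.map (IsScalarTower.toAlgHom S K L) (AlgHom.id S (S ⊗[R] A)) c = e := by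
    intro e he
    let Φ1 := cbc R S L A
    let Φ2 := cbc R K L A
    let Φ3 := cbc R S K A
    have h1 : IsCI (Φ2.symm (Φ1 e)) :=
      isCI_equiv Φ2.symm.toRingEquiv (isCI_equiv Φ1.toRingEquiv he)
    obtain ⟨c, -, hc⟩ := ci_of_numBlocks (hsplit) _ h1
    refine ⟨Φ3.symm c, Φ1.injective ?_⟩
    rw [← Φ2.apply_symm_apply (Φ1 e), ← hc]
    obtain ⟨c, rfl⟩ := Φ3.surjective c
    rw [Φ3.symm_apply_apply]
    clear hc h1
    induction c with
    | zero => simp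
    | add y z hy hz => simp only [map_add, TensorProduct.tmul_add, hy, hz]
    | tmul k y =>
      induction y with
      | zero => simp
      | add y z hy hz => simp only [map_add, TensorProduct.tmul_add, hy, hz]
      | tmul s a =>
        simp only [Φ1, Φ2, Φ3, Algebra.TensorProduct.map_tmul, cbc_tmul, AlgHom.id_apply]
        rw [Algebra.smul_def (s • k) (1 : L), mul_one, Algebra.smul_def s k, map_mul,
          ← IsScalarTower.algebraMap_apply S K L, Algebra.smul_def]
        rfl
  refine blockBijective_of_ci (φ : S ⊗[R] A →+* (IsLocalRing.ResidueField S) ⊗[R] A) hφs ?_ ?_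
  · intro e f he hf h
    refine ci_eq_base b e f he hf ((hφ0 _).1 ?_)
    rw [map_sub]
    exact sub_eq_zero.2 h
  · intro c hc
    obtain ⟨x, rfl⟩ := hφs c
    obtain ⟨e0, he0, h⟩ := core (L := L) huni' b hK x
      ((hφ0 _).1 (by rw [map_sub, map_mul, hc.1.eq, sub_self]))
      (fun y => (hφ0 _).1 (by rw [map_sub, map_mul, map_mul, hc.2, sub_self]))
    refine ⟨e0, he0, ?_⟩
    have := (hφ0 _).2 h
    rw [map_sub] at this
    exact sub_eq_zero.1 this

/-- **Proposition `unibranched_block_bijective`.** If `R` is a domain, `A` a finite flat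
`R`-algebra with block-split generic fiber, and `R_p` is unibranch (its integral closure in its
fraction field is local), then the quotient morphism `A_p → A(p) = A_p/p_pA_p` is block
bijective. Here `A_p = R_p ⊗[R] A` and `A(p) = κ(p) ⊗[R] A` with `κ(p)` the residue field. -/
theorem stmt4 (R : Type u) [CommRing R] [IsDomain R] (A : Type u) [Ring A] [Algebra R A]
    [Module.Finite R A] [Module.Flat R A]
    (hsplit : IsBlockSplit (FractionRing R) (FractionRing R ⊗[R] A))
    (p : PrimeSpectrum R)
    (huni : IsLocalRing (integralClosure (Localization.AtPrime p.asIdeal)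
      (FractionRing (Localization.AtPrime p.asIdeal)))) :
    BlockBijective ⇑(Algebra.TensorProduct.map
      (Ideal.Quotient.mkₐ R (IsLocalRing.maximalIdeal (Localization.AtPrime p.asIdeal)))
      (AlgHom.id R A) :
        Localization.AtPrime p.asIdeal ⊗[R] A →ₐ[R]
          IsLocalRing.ResidueField (Localization.AtPrime p.asIdeal) ⊗[R] A) := by
  exact main_abs (S := Localization.AtPrime p.asIdeal) (K := FractionRing R)
    (L := AlgebraicClosure (FractionRing R)) (hsplit _) (isLocal2 R p.asIdeal huni)
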